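/- arXiv:1512.08522 — 4 statements merged into one kernel-verified Lean document; each statement's English description precedes it below -/
import Mathlib

section
/- Let (E, ρ, ⟨·,·⟩_E, [·,·]_E) be a Courant algebroid and ∇ a Courant algebroid connection on E. Define the torsion operator T : Γ(E) × Γ(E) → Γ(E) by T(e,e') = ∇_e e' − ∇_{e'} e − [e,e']_E + ⟨∇_{e_λ} e, e'⟩_E · g_E^{-1}(e^λ), where (e_λ) is any local frame of E with dual frame (e^λ) (summation over λ) and g_E : E → E* is the isomorphism induced by ⟨·,·⟩_E. Then T is C^∞(M)-bilinear, and the map T_G(e,e',e'') := ⟨T(e,e'), e''⟩_E is completely skew-symmetric, i.e. T_G is a 3-form on E. -/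
/-!
An algebraic model of Courant algebroids over a smooth manifold `M`:
`M` is modelled by its commutative `ℝ`-algebra of smooth functions `C = C^∞(M)`,
vector fields are `ℝ`-linear derivations of `C`, and the module of sections `Γ(E)`
is modelled by a `C`-module `E`.  Local frames are encoded by finite families of
sections together with duality (w.r.t. the pairing) and spanning conditions.
-/

open scoped BigOperators

noncomputable section

/-- Vector fields on `M`, modelled as `ℝ`-linear derivations of `C = C^∞(M)`. -/
abbrev VectorField (C : Type) [CommRing C] [Algebra ℝ C] := Derivation ℝ C C

/-- A Courant algebroid `(E, ρ, ⟨·,·⟩_E, [·,·]_E)` over `M`. -/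
structure CourantAlgebroid (C : Type) [CommRing C] [Algebra ℝ C]
    (E : Type) [AddCommGroup E] [Module C E] [Module ℝ E] [IsScalarTower ℝ C E] where
  /-- The anchor `ρ ∈ Hom(E, TM)`. -/
  anchor : E →ₗ[C] VectorField C
  /-- The bracket `[·,·]_E` on sections. -/
  bracket : E → E → E
  add_left : ∀ e₁ e₂ e', bracket (e₁ + e₂) e' = bracket e₁ e' + bracket e₂ e'
  smul_real_left : ∀ (r : ℝ) (e e' : E), bracket (r • e) e' = r • bracket e e'
  add_right : ∀ e e₁ e₂, bracket e (e₁ + e₂) = bracket e e₁ + bracket e e₂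
  smul_real_right : ∀ (r : ℝ) (e e' : E), bracket e (r • e') = r • bracket e e'
  /-- The Leibniz rule `[e, f·e']_E = f·[e,e']_E + (ρ(e).f)·e'`. -/
  leibniz_rule : ∀ (f : C) (e e' : E),
    bracket e (f • e') = f • bracket e e' + anchor e f • e'
  /-- The Leibniz identity `[e,[e',e'']] = [[e,e'],e''] + [e',[e,e'']]`. -/
  leibniz_identity : ∀ e e' e'',
    bracket e (bracket e' e'') = bracket (bracket e e') e'' + bracket e' (bracket e e'')
  /-- The nondegenerate symmetric fiberwise pairing `⟨·,·⟩_E`. -/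
  pairing : E → E → C
  pairing_symm : ∀ e e', pairing e e' = pairing e' e
  pairing_add : ∀ e₁ e₂ e', pairing (e₁ + e₂) e' = pairing e₁ e' + pairing e₂ e'
  pairing_smul : ∀ (f : C) (e e' : E), pairing (f • e) e' = f * pairing e e'
  pairing_nondeg : ∀ e, (∀ e', pairing e e' = 0) → e = 0
  /-- Axiom (iii): `⟨[e,e]_E, e'⟩_E = (1/2)·ρ(e').⟨e,e⟩_E`. -/
  ax_symmetric : ∀ e e',
    pairing (bracket e e) e' = (2:ℝ)⁻¹ • anchor e' (pairing e e)
  /-- Axiom (iv): `ρ(e).⟨e',e''⟩_E = ⟨[e,e']_E,e''⟩_E + ⟨e',[e,e'']_E⟩_E`. -/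
  ax_invariance : ∀ e e' e'',
    anchor e (pairing e' e'') = pairing (bracket e e') e'' + pairing e' (bracket e e'')

variable {C : Type} [CommRing C] [Algebra ℝ C]
variable {E : Type} [AddCommGroup E] [Module C E] [Module ℝ E] [IsScalarTower ℝ C E]

/-- A Courant algebroid connection `∇` on `E`. -/
structure CourantConnection (A : CourantAlgebroid C E) where
  cd : E → E → E
  add_left : ∀ e₁ e₂ e', cd (e₁ + e₂) e' = cd e₁ e' + cd e₂ e'
  smul_left : ∀ (f : C) (e e' : E), cd (f • e) e' = f • cd e e'
  add_right : ∀ e e₁ e₂, cd e (e₁ + e₂) = cd e e₁ + cd e e₂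
  smul_right : ∀ (f : C) (e e' : E), cd e (f • e') = f • cd e e' + A.anchor e f • e'
  pairing_compat : ∀ e e' e'',
    A.anchor e (A.pairing e' e'') = A.pairing (cd e e') e'' + A.pairing e' (cd e e'')

/-- A local frame `(e_λ)` of `E` together with the metric-dualized dual frame
`g_E⁻¹(e^λ)`: `⟨g_E⁻¹(e^λ), e_μ⟩_E = δ^λ_μ` and every section expands in the frame. -/
structure CourantFrame (A : CourantAlgebroid C E) (ι : Type) [Fintype ι] [DecidableEq ι] where
  vec : ι → E
  dual : ι → E
  dual_pair : ∀ i j, A.pairing (dual i) (vec j) = if i = j then (1 : C) else 0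
  total : ∀ e : E, ∑ i, A.pairing (dual i) e • vec i = e

variable {ι : Type} [Fintype ι] [DecidableEq ι]

/-- The torsion operator
`T(e,e') = ∇_e e' − ∇_{e'} e − [e,e']_E + ⟨∇_{e_λ} e, e'⟩_E · g_E⁻¹(e^λ)`. -/
def torsionOp (A : CourantAlgebroid C E) (nab : CourantConnection A)
    (F : CourantFrame A ι) (e e' : E) : E :=
  nab.cd e e' - nab.cd e' e - A.bracket e e'
    + ∑ i, A.pairing (nab.cd (F.vec i) e) e' • F.dual i

/-- The Gualtieri torsion `T_G(e,e',e'') = ⟨T(e,e'), e''⟩_E`. -/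
def torsionG (A : CourantAlgebroid C E) (nab : CourantConnection A)
    (F : CourantFrame A ι) (e e' e'' : E) : C :=
  A.pairing (torsionOp A nab F e e') e''

/-!
For every `C`-linear form `φ` the section `φ(e_λ) · g_E⁻¹(e^λ)` is `g_E⁻¹(φ)`, so pairing the
torsion with `z` gives the frame-free formula
`T_G(x,y,z) = ⟨∇_x y, z⟩ - ⟨∇_y x, z⟩ - ⟨[x,y]_E, z⟩ + ⟨∇_z x, y⟩`.
Skew-symmetry in `x, y` is then metricity of `∇_z` against the polarization of axiom (iii), and
skew-symmetry in `y, z` is metricity of `∇_x` against axiom (iv). Hence `T_G` is invariant under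
cyclic permutations, and its evident linearity in the last argument passes to the other two.
-/

namespace CourantAlgebroid

theorem pairing_add_right (A : CourantAlgebroid C E) (x y z : E) :
    A.pairing x (y + z) = A.pairing x y + A.pairing x z := by
  simp only [A.pairing_symm x, A.pairing_add]

theorem pairing_smul_right (A : CourantAlgebroid C E) (f : C) (x y : E) :
    A.pairing x (f • y) = f * A.pairing x y := by
  simp only [A.pairing_symm x, A.pairing_smul]

/-- The pairing `⟨·,·⟩_E` as a bundled `C`-bilinear form, so that Mathlib's lemmas on linear maps
apply to it. -/
def pairingForm (A : CourantAlgebroid C E) : LinearMap.BilinForm C E :=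
  LinearMap.mk₂ C A.pairing A.pairing_add A.pairing_smul A.pairing_add_right A.pairing_smul_right

theorem pairing_sub (A : CourantAlgebroid C E) (x y z : E) :
    A.pairing (x - y) z = A.pairing x z - A.pairing y z :=
  A.pairingForm.map_sub₂ x y z

theorem pairing_neg (A : CourantAlgebroid C E) (x z : E) :
    A.pairing (-x) z = -A.pairing x z :=
  A.pairingForm.map_neg₂ x z

theorem pairing_sum {κ : Type*} (A : CourantAlgebroid C E) (s : Finset κ) (v : κ → E) (z : E) :
    A.pairing (∑ i ∈ s, v i) z = ∑ i ∈ s, A.pairing (v i) z :=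
  A.pairingForm.map_sum₂ s v z

theorem ext_pairing (A : CourantAlgebroid C E) {x y : E}
    (h : ∀ z, A.pairing x z = A.pairing y z) : x = y :=
  sub_eq_zero.mp <| A.pairing_nondeg _ fun z => by rw [A.pairing_sub, h, sub_self]

theorem pairing_bracket_add_pairing_bracket_swap (A : CourantAlgebroid C E) (x y z : E) :
    A.pairing (A.bracket x y) z + A.pairing (A.bracket y x) z = A.anchor z (A.pairing x y) := by
  have polarized := A.ax_symmetric (x + y) z
  simp only [A.add_left, A.add_right, A.pairing_add, A.pairing_add_right, map_add, smul_add,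
    A.ax_symmetric x z, A.ax_symmetric y z, A.pairing_symm y x] at polarized
  have halves : (2 : ℝ)⁻¹ • A.anchor z (A.pairing x y) + (2 : ℝ)⁻¹ • A.anchor z (A.pairing x y)
      = A.anchor z (A.pairing x y) := by
    rw [← add_smul, ← two_mul, mul_inv_cancel₀ two_ne_zero, one_smul]
  linear_combination polarized + halves

end CourantAlgebroid

/-- The covariant differential `∇e : z ↦ ∇_z e` of a section `e`, as a `C`-linear map. -/
def CourantConnection.covariantDifferential {A : CourantAlgebroid C E} (nab : CourantConnection A)
    (e : E) : E →ₗ[C] E where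
  toFun z := nab.cd z e
  map_add' x y := nab.add_left x y e
  map_smul' f x := nab.smul_left f x e

theorem CourantFrame.pairing_sum_smul_dual {A : CourantAlgebroid C E} (F : CourantFrame A ι)
    (φ : E →ₗ[C] C) (z : E) :
    A.pairing (∑ i, φ (F.vec i) • F.dual i) z = φ z :=
  calc A.pairing (∑ i, φ (F.vec i) • F.dual i) z
      = ∑ i, A.pairing (F.dual i) z * φ (F.vec i) := by
        simp only [A.pairing_sum, A.pairing_smul, mul_comm]
    _ = φ (∑ i, A.pairing (F.dual i) z • F.vec i) := by
        simp only [map_sum, map_smul, smul_eq_mul]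
    _ = φ z := by rw [F.total]

section Torsion

variable (A : CourantAlgebroid C E) (nab : CourantConnection A) (F : CourantFrame A ι)

theorem torsionG_eq (x y z : E) :
    torsionG A nab F x y z = A.pairing (nab.cd x y) z - A.pairing (nab.cd y x) z
      - A.pairing (A.bracket x y) z + A.pairing (nab.cd z x) y := by
  have frame_term : A.pairing (∑ i, A.pairing (nab.cd (F.vec i) x) y • F.dual i) z
      = A.pairing (nab.cd z x) y :=
    F.pairing_sum_smul_dual (A.pairingForm.flip y ∘ₗ nab.covariantDifferential x) z
  rw [torsionG, torsionOp, A.pairing_add, A.pairing_sub, A.pairing_sub, frame_term]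

theorem torsionG_swap_left (x y z : E) :
    torsionG A nab F x y z = -torsionG A nab F y x z := by
  have metricity := nab.pairing_compat z x y
  rw [A.pairing_symm x (nab.cd z y)] at metricity
  rw [torsionG_eq, torsionG_eq]
  linear_combination -metricity - A.pairing_bracket_add_pairing_bracket_swap x y z

theorem torsionG_swap_right (x y z : E) :
    torsionG A nab F x y z = -torsionG A nab F x z y := by
  have metricity := nab.pairing_compat x y z
  have invariance := A.ax_invariance x y z
  rw [A.pairing_symm y (nab.cd x z)] at metricity
  rw [A.pairing_symm y (A.bracket x z)] at invariance
  rw [torsionG_eq, torsionG_eq]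
  linear_combination invariance - metricity

theorem torsionOp_swap (x y : E) : torsionOp A nab F x y = -torsionOp A nab F y x :=
  A.ext_pairing fun z => by
    rw [A.pairing_neg]
    exact torsionG_swap_left A nab F x y z

theorem pairing_torsionOp_rotate (x y z : E) :
    A.pairing (torsionOp A nab F x y) z = A.pairing (torsionOp A nab F y z) x := by
  change torsionG A nab F x y z = torsionG A nab F y z x
  rw [torsionG_swap_left, torsionG_swap_right, neg_neg]

theorem torsionOp_add_left (x₁ x₂ y : E) :
    torsionOp A nab F (x₁ + x₂) y = torsionOp A nab F x₁ y + torsionOp A nab F x₂ y :=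
  A.ext_pairing fun z => by
    simp only [A.pairing_add, A.pairing_add_right, pairing_torsionOp_rotate A nab F _ y z]

theorem torsionOp_smul_left (f : C) (x y : E) :
    torsionOp A nab F (f • x) y = f • torsionOp A nab F x y :=
  A.ext_pairing fun z => by
    simp only [A.pairing_smul, A.pairing_smul_right, pairing_torsionOp_rotate A nab F _ y z]

theorem torsionOp_add_right (x y₁ y₂ : E) :
    torsionOp A nab F x (y₁ + y₂) = torsionOp A nab F x y₁ + torsionOp A nab F x y₂ := by
  simp only [torsionOp_swap A nab F x, torsionOp_add_left, neg_add]

theorem torsionOp_smul_right (f : C) (x y : E) :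
    torsionOp A nab F x (f • y) = f • torsionOp A nab F x y := by
  simp only [torsionOp_swap A nab F x, torsionOp_smul_left, smul_neg]

end Torsion

/-- The torsion operator of a Courant algebroid connection is
`C^∞(M)`-bilinear, and `T_G(e,e',e'') := ⟨T(e,e'), e''⟩_E` is completely skew-symmetric,
i.e. `T_G` is a 3-form on `E`. -/
theorem torsion_is_tensorial_and_gualtieri_torsion_is_threeform
    (C : Type) [CommRing C] [Algebra ℝ C]
    (E : Type) [AddCommGroup E] [Module C E] [Module ℝ E] [IsScalarTower ℝ C E]
    (A : CourantAlgebroid C E) (nab : CourantConnection A)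
    (ι : Type) [Fintype ι] [DecidableEq ι] (F : CourantFrame A ι) :
    -- `T` is C^∞(M)-bilinear:
    ((∀ e₁ e₂ e', torsionOp A nab F (e₁ + e₂) e'
        = torsionOp A nab F e₁ e' + torsionOp A nab F e₂ e') ∧
     (∀ (f : C) (e e' : E), torsionOp A nab F (f • e) e' = f • torsionOp A nab F e e') ∧
     (∀ e e₁ e₂, torsionOp A nab F e (e₁ + e₂)
        = torsionOp A nab F e e₁ + torsionOp A nab F e e₂) ∧
     (∀ (f : C) (e e' : E), torsionOp A nab F e (f • e') = f • torsionOp A nab F e e')) ∧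
    -- `T_G` is completely skew-symmetric:
    ((∀ e e' e'', torsionG A nab F e e' e'' = - torsionG A nab F e' e e'') ∧
     (∀ e e' e'', torsionG A nab F e e' e'' = - torsionG A nab F e e'' e')) := by
  exact ⟨⟨torsionOp_add_left A nab F, torsionOp_smul_left A nab F, torsionOp_add_right A nab F,
    torsionOp_smul_right A nab F⟩, torsionG_swap_left A nab F, torsionG_swap_right A nab F⟩
end
end

section
/- Let V be a finite-dimensional real vector space, c a negative definite symmetric bilinear form on V, and 𝔥 a positive definite symmetric bilinear form on V. If 𝔥 c^{−1} 𝔥 = c, where 𝔥, c : V → V* are the induced linear maps and c^{−1} : V* → V their inverses, then 𝔥 = −c. -/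
/-!
STATEMENT 8: If `c` is a negative definite and `𝔥` a positive definite symmetric
bilinear form on a finite-dimensional real vector space with `𝔥 c⁻¹ 𝔥 = c`, then `𝔥 = −c`.
(Bilinear forms are identified with the linear maps `V → V*` they induce.)
-/

noncomputable section

/-- When `f` is invertible with inverse `s`, the map `s ∘ g` is an involution, `x + s (g x)` is fixed
by it, and `g` agrees with `f` at its fixed points. -/
theorem apply_add_rightInverse_apply_eq {A B F : Type*} [Add A] [AddCommMagma B]
    [FunLike F A B] [AddHomClass F A B] {f g : F} {s : B → A}
    (hs : Function.RightInverse s f) (hgsg : ∀ x, g (s (g x)) = f x) (x : A) :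
    g (x + s (g x)) = f (x + s (g x)) := by
  rw [map_add, map_add, hgsg, hs, add_comm]

theorem apply_eq_neg_of_apply_rightInverse_apply {A B F : Type*} [AddZeroClass A]
    [AddCommGroup B] [FunLike F A B] [AddMonoidHomClass F A B] {f g : F} {s : B → A}
    (hs : Function.RightInverse s f) (hgsg : ∀ x, g (s (g x)) = f x)
    (hfg : ∀ y, g y = f y → y = 0) (x : A) :
    g x = -f x := by
  have hx : x + s (g x) = 0 := hfg _ (apply_add_rightInverse_apply_eq hs hgsg x)
  refine eq_neg_of_add_eq_zero_right ?_
  calc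
    f x + g x = f (x + s (g x)) := by rw [map_add, hs]
    _ = 0 := by rw [hx, map_zero]

theorem eq_zero_of_apply_eq_of_neg_of_pos {R V : Type*} [CommSemiring R] [Preorder R]
    [AddCommMonoid V] [Module R V] {c h : V →ₗ[R] Module.Dual R V}
    (hc_neg : ∀ x, x ≠ 0 → c x x < 0) (hh_pos : ∀ x, x ≠ 0 → 0 < h x x)
    {y : V} (hy : h y = c y) : y = 0 := by
  by_contra hne
  exact lt_asymm (hc_neg y hne) (hy ▸ hh_pos y hne)

theorem compatible_metric_is_neg_killing_general {R V : Type*} [CommRing R] [Preorder R]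
    [AddCommMonoid V] [Module R V] {c h : V →ₗ[R] Module.Dual R V}
    (hc_neg : ∀ x, x ≠ 0 → c x x < 0) (hh_pos : ∀ x, x ≠ 0 → 0 < h x x)
    {cinv : Module.Dual R V → V} (hcinv : Function.RightInverse cinv c)
    (hcompat : ∀ x, h (cinv (h x)) = c x) :
    h = -c :=
  LinearMap.ext <| apply_eq_neg_of_apply_rightInverse_apply hcinv hcompat fun _ =>
    eq_zero_of_apply_eq_of_neg_of_pos hc_neg hh_pos

/-- **STATEMENT 8.** -/
theorem compatible_metric_is_neg_killing
    (V : Type) [AddCommGroup V] [Module ℝ V] [FiniteDimensional ℝ V]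
    (c h : V →ₗ[ℝ] Module.Dual ℝ V)
    (hc_symm : ∀ x y : V, c x y = c y x)
    (hh_symm : ∀ x y : V, h x y = h y x)
    (hc_neg : ∀ x : V, x ≠ 0 → c x x < 0)
    (hh_pos : ∀ x : V, x ≠ 0 → 0 < h x x)
    -- `c⁻¹ : V* → V`, the inverse of the map induced by the nondegenerate form `c`:
    (cinv : Module.Dual ℝ V →ₗ[ℝ] V)
    (hcinv_left : ∀ x : V, cinv (c x) = x)
    (hcinv_right : ∀ φ : Module.Dual ℝ V, c (cinv φ) = φ)
    -- the compatibility `𝔥 c⁻¹ 𝔥 = c` as maps `V → V*`: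
    (hcompat : ∀ x : V, h (cinv (h x)) = c x) :
    h = -c :=
  compatible_metric_is_neg_killing_general hc_neg hh_pos hcinv_right hcompat
end
end

section
/- Let V and 𝔤 be finite-dimensional real vector spaces, c a nondegenerate symmetric bilinear form on 𝔤, and E' = V ⊕ 𝔤 ⊕ V* with the pairing ⟨(X,Φ,ξ), (Y,Φ',η)⟩ = η(X) + ξ(Y) + c(Φ,Φ'). Let 𝐆' be a positive definite symmetric bilinear form on E', written in its unique Gauss decomposition 𝐆' = Nᵀ D N with N unipotent lower block-triangular with blocks A' : V → 𝔤, B' : 𝔤 → V*, C : V → V*, and D = BlockDiag(g₀, 𝔥, h₀^{−1}) with g₀, h₀ positive definite on V and 𝔥 positive definite on 𝔤. Then 𝐆' is a generalized metric (i.e. the endomorphism τ determined by 𝐆'(ψ,ψ') = ⟨τ(ψ), ψ'⟩ satisfies τ² = 1) if and only if h₀ = g₀, B' = −A'ᵀ c, C = −B₀ − (1/2) A'ᵀ c A' for some antisymmetric B₀ : V → V*, and 𝔥 c^{−1} 𝔥 = c. -/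
/-!
STATEMENT 9: Pointwise linear-algebra classification of generalized metrics on the
heterotic Courant algebroid fiber `E' = V ⊕ 𝔤 ⊕ V*`.
-/

noncomputable section

section

variable (V Gg : Type) [AddCommGroup V] [Module ℝ V] [AddCommGroup Gg] [Module ℝ Gg]

/-- The pairing `⟨(X,Φ,ξ), (Y,Φ',η)⟩ = η(X) + ξ(Y) + c(Φ,Φ')` on `E' = V ⊕ 𝔤 ⊕ V*`. -/
def pairHet (c : Gg →ₗ[ℝ] Module.Dual ℝ Gg)
    (w w' : V × Gg × Module.Dual ℝ V) : ℝ :=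
  w'.2.2 w.1 + w.2.2 w'.1 + c w.2.1 w'.2.1

/-- The unipotent lower block-triangular factor `N` with blocks `A' : V → 𝔤`,
`B' : 𝔤 → V*`, `C : V → V*`. -/
def gaussN (A' : V →ₗ[ℝ] Gg) (B' : Gg →ₗ[ℝ] Module.Dual ℝ V)
    (Cm : V →ₗ[ℝ] Module.Dual ℝ V)
    (w : V × Gg × Module.Dual ℝ V) : V × Gg × Module.Dual ℝ V :=
  (w.1, A' w.1 + w.2.1, Cm w.1 + B' w.2.1 + w.2.2)

/-- The bilinear form `𝐆' = NᵀDN` with `D = BlockDiag(g₀, 𝔥, h₀⁻¹)`. -/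
def gaussG (A' : V →ₗ[ℝ] Gg) (B' : Gg →ₗ[ℝ] Module.Dual ℝ V)
    (Cm : V →ₗ[ℝ] Module.Dual ℝ V)
    (g0 : V →ₗ[ℝ] Module.Dual ℝ V) (hG : Gg →ₗ[ℝ] Module.Dual ℝ Gg)
    (h0inv : Module.Dual ℝ V →ₗ[ℝ] V)
    (w w' : V × Gg × Module.Dual ℝ V) : ℝ :=
  g0 (gaussN V Gg A' B' Cm w).1 (gaussN V Gg A' B' Cm w').1
    + hG (gaussN V Gg A' B' Cm w).2.1 (gaussN V Gg A' B' Cm w').2.1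
    + (gaussN V Gg A' B' Cm w).2.2 (h0inv (gaussN V Gg A' B' Cm w').2.2)

end

/-! Conjugating `τ` by `N` gives `σ = P D`, where `P = N ⟨·,·⟩⁻¹ Nᵀ` has the blocks
`(0, 0, 1; 0, c⁻¹, K; 1, Kᵀ, S)` with `K = A + c⁻¹Bᵀ` and `S = C + Cᵀ + B c⁻¹ Bᵀ`. Applying `σ²` to
`(X, 0, 0)` gives `(h⁻¹gX, K h⁻¹gX, S h⁻¹gX)`, so `σ² = 1` forces `h = g`, `K = 0` and `S = 0`. Then
`σ` exchanges `V` and `V*` by `g` and `g⁻¹`, and the only condition left is `(c⁻¹𝔥)² = 1`. Finally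
`K = 0` says `B = -Aᵀc`, which turns `S = 0` into `C + Cᵀ = -AᵀcA`, so that `C + ½AᵀcA` is
antisymmetric. -/

theorem involutive_iff_of_semiconj {α β : Type*} (e : α ≃ β) {f : α → α} {g : β → β}
    (hfg : Function.Semiconj e f g) : Function.Involutive f ↔ Function.Involutive g := by
  refine e.forall_congr fun x ↦ ?_
  rw [← hfg.eq x, ← hfg.eq (f x), e.apply_eq_iff_eq]

section

variable {R V 𝔤 : Type*} [CommRing R] [AddCommGroup V] [Module R V] [AddCommGroup 𝔤] [Module R 𝔤]

section

variable (e : V ≃ₗ[R] Module.Dual R V)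

theorem dual_apply_symm_comm (he : ∀ x y, e x y = e y x) (φ ψ : Module.Dual R V) :
    φ (e.symm ψ) = ψ (e.symm φ) := by
  simpa only [LinearEquiv.apply_symm_apply] using he (e.symm φ) (e.symm ψ)

theorem eq_of_forall_dual_apply_eq (he : ∀ x y, e x y = e y x) {x y : V}
    (hxy : ∀ φ : Module.Dual R V, φ x = φ y) : x = y :=
  e.injective <| LinearMap.ext fun z ↦ by rw [he x, he y, hxy]

end

/-- The pairing `⟨(X, Φ, ξ), (Y, Φ', η)⟩ = η(X) + ξ(Y) + c(Φ, Φ')` on `V ⊕ 𝔤 ⊕ V*` over a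
commutative ring, as a bilinear form. -/
def heteroticPairing (c : 𝔤 →ₗ[R] Module.Dual R 𝔤) :
    LinearMap.BilinForm R (V × 𝔤 × Module.Dual R V) :=
  LinearMap.mk₂ R (fun w w' ↦ w'.2.2 w.1 + w.2.2 w'.1 + c w.2.1 w'.2.1)
    (fun _ _ _ ↦ by simp only [Prod.fst_add, Prod.snd_add, map_add, LinearMap.add_apply]; abel)
    (fun _ _ _ ↦ by simp [mul_add])
    (fun _ _ _ ↦ by simp only [Prod.fst_add, Prod.snd_add, map_add, LinearMap.add_apply]; abel)
    (fun _ _ _ ↦ by simp [mul_add])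

section

variable (c : 𝔤 ≃ₗ[R] Module.Dual R 𝔤) (A : V →ₗ[R] 𝔤) (B : 𝔤 →ₗ[R] Module.Dual R V)
  (C g : V →ₗ[R] Module.Dual R V) (h : V ≃ₗ[R] Module.Dual R V) (𝔥 : 𝔤 →ₗ[R] Module.Dual R 𝔤)

/-- The unipotent lower block-triangular automorphism `N` of `V ⊕ 𝔤 ⊕ V*` with subdiagonal blocks
`A`, `B` and corner block `C`. -/
def unipotentEquiv : (V × 𝔤 × Module.Dual R V) ≃ₗ[R] (V × 𝔤 × Module.Dual R V) where
  toFun w := (w.1, A w.1 + w.2.1, C w.1 + B w.2.1 + w.2.2)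
  invFun w := (w.1, w.2.1 - A w.1, w.2.2 - B (w.2.1 - A w.1) - C w.1)
  map_add' w w' := by
    ext <;> simp only [Prod.fst_add, Prod.snd_add, Prod.mk_add_mk, map_add,
      LinearMap.add_apply] <;> abel
  map_smul' r w := by ext <;> simp
  left_inv w := by
    ext <;> simp only [add_sub_cancel_left, LinearMap.sub_apply, LinearMap.add_apply]; abel
  right_inv w := by
    ext <;> simp only [add_sub_cancel, map_sub, LinearMap.add_apply, LinearMap.sub_apply]; abel

/-- The bilinear form on `V ⊕ 𝔤 ⊕ V*` with matrix `BlockDiag(g, 𝔥, k)`. The block `k` is a map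
`V* → V`, to be thought of as an inverse metric. -/
def blockDiagForm (k : Module.Dual R V →ₗ[R] V) :
    LinearMap.BilinForm R (V × 𝔤 × Module.Dual R V) :=
  LinearMap.mk₂ R (fun w w' ↦ g w.1 w'.1 + 𝔥 w.2.1 w'.2.1 + w.2.2 (k w'.2.2))
    (fun _ _ _ ↦ by simp only [Prod.fst_add, Prod.snd_add, map_add, LinearMap.add_apply]; abel)
    (fun _ _ _ ↦ by simp [mul_add])
    (fun _ _ _ ↦ by simp only [Prod.fst_add, Prod.snd_add, map_add]; abel)
    (fun _ _ _ ↦ by simp [mul_add])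

/-- The form `Nᵀ D N` with `N` unipotent and `D = BlockDiag(g, 𝔥, k)`. -/
def gaussForm (k : Module.Dual R V →ₗ[R] V) :
    LinearMap.BilinForm R (V × 𝔤 × Module.Dual R V) :=
  (blockDiagForm g 𝔥 k).comp (unipotentEquiv A B C : _ →ₗ[R] _) (unipotentEquiv A B C : _ →ₗ[R] _)

/-- The block `K = A + c⁻¹Bᵀ` of the transported inverse pairing `N ⟨·,·⟩⁻¹ Nᵀ`. Here `Bᵀ` is
restricted along `V → V**`, so that it is `B.flip`. -/
def transportedMixedBlock : V →ₗ[R] 𝔤 :=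
  A + c.symm ∘ₗ B.flip

/-- The block `S = C + Cᵀ + B c⁻¹ Bᵀ` of the transported inverse pairing `N ⟨·,·⟩⁻¹ Nᵀ`. -/
def transportedCornerBlock : V →ₗ[R] Module.Dual R V :=
  C + C.flip + B ∘ₗ c.symm ∘ₗ B.flip

/-- The endomorphism `P D` of `V ⊕ 𝔤 ⊕ V*`, where `D = BlockDiag(g, 𝔥, h⁻¹)` and `P` has the rows
`(0, 0, 1)`, `(0, c⁻¹, K)` and `(1, Kᵀ, S)`. When `K` and `S` are the transported blocks,
this is the conjugate `N τ N⁻¹`. -/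
def antiTriangularEnd (K : V →ₗ[R] 𝔤) (S : V →ₗ[R] Module.Dual R V) :
    Module.End R (V × 𝔤 × Module.Dual R V) where
  toFun w := (h.symm w.2.2, c.symm (𝔥 w.2.1) + K (h.symm w.2.2),
    g w.1 + 𝔥 w.2.1 ∘ₗ K + S (h.symm w.2.2))
  map_add' w w' := by
    ext <;> simp only [Prod.fst_add, Prod.snd_add, Prod.mk_add_mk, map_add,
      LinearMap.add_apply, LinearMap.comp_apply] <;> abel
  map_smul' r w := by ext <;> simp

variable {c A B C g h 𝔥}

theorem antiTriangularEnd_involutive_iff {K : V →ₗ[R] 𝔤} {S : V →ₗ[R] Module.Dual R V} :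
    Function.Involutive (antiTriangularEnd c g h 𝔥 K S) ↔
      (h : V →ₗ[R] Module.Dual R V) = g ∧ K = 0 ∧ S = 0 ∧ Function.Involutive (c.symm ∘ 𝔥) := by
  constructor
  · intro hσ
    have sq_inl (x : V) : h.symm (g x) = x ∧ K (h.symm (g x)) = 0 ∧ S (h.symm (g x)) = 0 := by
      simpa [antiTriangularEnd] using hσ (x, 0, 0)
    have hK : K = 0 := LinearMap.ext fun x ↦ by simpa [(sq_inl x).1] using (sq_inl x).2.1
    have hS : S = 0 := LinearMap.ext fun x ↦ by simpa [(sq_inl x).1] using (sq_inl x).2.2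
    refine ⟨LinearMap.ext fun x ↦ (h.symm_apply_eq.mp (sq_inl x).1).symm, hK, hS, fun u ↦ ?_⟩
    simpa [antiTriangularEnd, hK] using congrArg (·.2.1) (hσ (0, u, 0))
  · rintro ⟨rfl, rfl, rfl, hf⟩ w
    ext <;> simp [antiTriangularEnd, show c.symm (𝔥 (c.symm (𝔥 w.2.1))) = w.2.1 from hf w.2.1]

theorem components_of_gaussForm_eq_heteroticPairing (hh : ∀ x y, h x y = h y x)
    {w t : V × 𝔤 × Module.Dual R V}
    (ht : ∀ w', gaussForm A B C g 𝔥 h.symm w w' = heteroticPairing (c : 𝔤 →ₗ[R] _) t w') :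
    t.1 = h.symm (unipotentEquiv A B C w).2.2 ∧
      c t.2.1 = 𝔥 (unipotentEquiv A B C w).2.1 + B.flip t.1 ∧
      t.2.2 = g w.1 + 𝔥 (unipotentEquiv A B C w).2.1 ∘ₗ A + C.flip t.1 := by
  set a := unipotentEquiv A B C w
  have pairing_eq (Y : V) (Ψ : 𝔤) (η : Module.Dual R V) :
      g w.1 Y + 𝔥 a.2.1 (A Y + Ψ) + (C Y + B Ψ + η) (h.symm a.2.2) =
        η t.1 + t.2.2 Y + c t.2.1 Ψ := by
    rw [dual_apply_symm_comm h hh]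
    exact ht (Y, Ψ, η)
  have fst_eq : t.1 = h.symm a.2.2 :=
    eq_of_forall_dual_apply_eq h hh fun η ↦ by simpa using (pairing_eq 0 0 η).symm
  refine ⟨fst_eq, LinearMap.ext fun Ψ ↦ ?_, LinearMap.ext fun Y ↦ ?_⟩
  · simpa [fst_eq] using (pairing_eq 0 Ψ 0).symm
  · simpa [fst_eq] using (pairing_eq Y 0 0).symm

theorem unipotentEquiv_semiconj (hc : ∀ x y, c x y = c y x) (hh : ∀ x y, h x y = h y x)
    {τ : V × 𝔤 × Module.Dual R V → V × 𝔤 × Module.Dual R V}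
    (hτ : ∀ w w', gaussForm A B C g 𝔥 h.symm w w' = heteroticPairing (c : 𝔤 →ₗ[R] _) (τ w) w') :
    Function.Semiconj (unipotentEquiv A B C) τ
      (antiTriangularEnd c g h 𝔥 (transportedMixedBlock c A B) (transportedCornerBlock c B C)) := by
  intro w
  obtain ⟨fst_eq, mid_eq, last_eq⟩ := components_of_gaussForm_eq_heteroticPairing hh (hτ w)
  set a := unipotentEquiv A B C w
  set t := τ w
  have mid_eq_symm : t.2.1 = c.symm (𝔥 a.2.1) + c.symm (B.flip t.1) := by
    rw [← map_add, ← mid_eq, c.symm_apply_apply]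
  refine Prod.ext fst_eq (Prod.ext ?_ (LinearMap.ext fun Y ↦ ?_))
  · change A t.1 + t.2.1 = c.symm (𝔥 a.2.1) + (A (h.symm a.2.2) + c.symm (B.flip (h.symm a.2.2)))
    rw [mid_eq_symm, ← fst_eq]
    abel
  · have transpose_B : B (c.symm (𝔥 a.2.1)) Y = 𝔥 a.2.1 (c.symm (B.flip Y)) :=
      dual_apply_symm_comm c hc (B.flip Y) (𝔥 a.2.1)
    change C t.1 Y + B t.2.1 Y + t.2.2 Y = g w.1 Y + 𝔥 a.2.1 (A Y + c.symm (B.flip Y)) +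
      (C (h.symm a.2.2) Y + C Y (h.symm a.2.2) + B (c.symm (B.flip (h.symm a.2.2))) Y)
    rw [last_eq, mid_eq_symm, ← fst_eq]
    simp only [map_add, LinearMap.add_apply, LinearMap.comp_apply, LinearMap.flip_apply,
      transpose_B]
    ring

theorem transportedMixedBlock_eq_zero_iff (hc : ∀ x y, c x y = c y x) :
    transportedMixedBlock c A B = 0 ↔ ∀ Φ X, B Φ X = -c Φ (A X) := by
  have mixed_apply (X : V) : transportedMixedBlock c A B X = 0 ↔ B.flip X = -c (A X) := by
    rw [← c.map_eq_zero_iff, transportedMixedBlock, LinearMap.add_apply, map_add, add_comm,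
      ← eq_neg_iff_add_eq_zero]
    simp
  simp only [LinearMap.ext_iff, LinearMap.zero_apply, mixed_apply, LinearMap.flip_apply,
    LinearMap.neg_apply, hc (A _)]
  exact forall_comm

theorem transportedCornerBlock_eq_of_mixedBlock_eq_zero (hc : ∀ x y, c x y = c y x)
    (hK : transportedMixedBlock c A B = 0) :
    transportedCornerBlock c B C = C + C.flip + (c : 𝔤 →ₗ[R] Module.Dual R 𝔤).compl₁₂ A A := by
  have symm_flip (X : V) : c.symm (B.flip X) = -A X :=
    eq_neg_of_add_eq_zero_right (LinearMap.congr_fun hK X)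
  ext X Y
  simp [transportedCornerBlock, symm_flip, (transportedMixedBlock_eq_zero_iff hc).mp hK]

variable (c 𝔥) in
theorem symm_comp_involutive_iff :
    Function.Involutive (c.symm ∘ 𝔥) ↔ ∀ Φ Φ', 𝔥 (c.symm (𝔥 Φ)) Φ' = c Φ Φ' :=
  forall_congr' fun Φ ↦ (c.symm_apply_eq (x := 𝔥 (c.symm (𝔥 Φ)))).trans LinearMap.ext_iff

theorem add_flip_add_eq_zero_iff [Invertible (2 : R)] {C b : V →ₗ[R] Module.Dual R V}
    (hb : ∀ x y, b x y = b y x) :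
    C + C.flip + b = 0 ↔ ∃ B₀ : V →ₗ[R] Module.Dual R V, (∀ x y, B₀ x y = -B₀ y x) ∧
      ∀ x y, C x y = -B₀ x y - ⅟2 * b x y := by
  have half_add_half (r : R) : ⅟2 * r + ⅟2 * r = r := by
    rw [← add_mul, invOf_two_add_invOf_two, one_mul]
  simp only [LinearMap.ext_iff₂, LinearMap.add_apply, LinearMap.flip_apply, LinearMap.zero_apply]
  constructor
  · intro hC
    refine ⟨-C - (⅟2 : R) • b, fun x y ↦ ?_, fun x y ↦ by simp⟩
    simp only [LinearMap.sub_apply, LinearMap.neg_apply, LinearMap.smul_apply, smul_eq_mul, hb y x]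
    linear_combination -hC x y - half_add_half (b x y)
  · rintro ⟨B₀, hB₀, hC⟩ x y
    rw [hC x y, hC y x, hB₀ y x, hb y x]
    linear_combination -half_add_half (b x y)

theorem heterotic_generalized_metric_classification_general [Invertible (2 : R)]
    (hc : ∀ x y, c x y = c y x) (hh : ∀ x y, h x y = h y x)
    {τ : V × 𝔤 × Module.Dual R V → V × 𝔤 × Module.Dual R V}
    (hτ : ∀ w w', gaussForm A B C g 𝔥 h.symm w w' = heteroticPairing (c : 𝔤 →ₗ[R] _) (τ w) w') :
    (∀ w, τ (τ w) = w) ↔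
      (h : V →ₗ[R] Module.Dual R V) = g ∧
      (∀ Φ X, B Φ X = -c Φ (A X)) ∧
      (∃ B₀ : V →ₗ[R] Module.Dual R V, (∀ X Y, B₀ X Y = -B₀ Y X) ∧
        ∀ X Y, C X Y = -B₀ X Y - ⅟2 * c (A X) (A Y)) ∧
      ∀ Φ Φ', 𝔥 (c.symm (𝔥 Φ)) Φ' = c Φ Φ' := by
  let K := transportedMixedBlock c A B
  let S := transportedCornerBlock c B C
  have corner_iff (hK : K = 0) : S = 0 ↔
      ∃ B₀ : V →ₗ[R] Module.Dual R V, (∀ X Y, B₀ X Y = -B₀ Y X) ∧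
        ∀ X Y, C X Y = -B₀ X Y - ⅟2 * c (A X) (A Y) := by
    rw [show S = _ from transportedCornerBlock_eq_of_mixedBlock_eq_zero hc hK]
    exact add_flip_add_eq_zero_iff fun X Y ↦ hc (A X) (A Y)
  rw [← transportedMixedBlock_eq_zero_iff hc, ← symm_comp_involutive_iff]
  calc
    Function.Involutive τ ↔ Function.Involutive (antiTriangularEnd c g h 𝔥 K S) :=
      involutive_iff_of_semiconj (unipotentEquiv A B C).toEquiv (unipotentEquiv_semiconj hc hh hτ)
    _ ↔ (h : V →ₗ[R] Module.Dual R V) = g ∧ K = 0 ∧ S = 0 ∧ Function.Involutive (c.symm ∘ 𝔥) :=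
      antiTriangularEnd_involutive_iff
    _ ↔ _ := and_congr_right' (and_congr_right fun hK ↦ and_congr_left' (corner_iff hK))

end

end

/-- **STATEMENT 9.** With `𝐆' = NᵀDN` in its Gauss decomposition as above, `𝐆'` is a
generalized metric, i.e. the endomorphism `τ` determined by `𝐆'(ψ,ψ') = ⟨τ(ψ), ψ'⟩`
satisfies `τ² = 1`, if and only if `h₀ = g₀`, `B' = −A'ᵀ c`,
`C = −B₀ − (1/2)A'ᵀ c A'` for some antisymmetric `B₀ : V → V*`, and `𝔥 c⁻¹ 𝔥 = c`. -/
theorem heterotic_generalized_metric_classification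
    (V Gg : Type) [AddCommGroup V] [Module ℝ V] [FiniteDimensional ℝ V]
    [AddCommGroup Gg] [Module ℝ Gg] [FiniteDimensional ℝ Gg]
    -- the nondegenerate symmetric form `c` on `𝔤`, with its inverse:
    (c : Gg →ₗ[ℝ] Module.Dual ℝ Gg) (hc_symm : ∀ x y : Gg, c x y = c y x)
    (cinv : Module.Dual ℝ Gg →ₗ[ℝ] Gg)
    (hcinv_left : ∀ x, cinv (c x) = x) (hcinv_right : ∀ φ, c (cinv φ) = φ)
    -- the blocks of the Gauss decomposition of `𝐆'`:
    (A' : V →ₗ[ℝ] Gg) (B' : Gg →ₗ[ℝ] Module.Dual ℝ V) (Cm : V →ₗ[ℝ] Module.Dual ℝ V)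
    (g0 h0 : V →ₗ[ℝ] Module.Dual ℝ V) (hG : Gg →ₗ[ℝ] Module.Dual ℝ Gg)
    -- g₀, h₀ positive definite (symmetric) on V, 𝔥 positive definite (symmetric) on 𝔤:
    (hg0_symm : ∀ x y : V, g0 x y = g0 y x) (hg0_pos : ∀ x : V, x ≠ 0 → 0 < g0 x x)
    (hh0_symm : ∀ x y : V, h0 x y = h0 y x) (hh0_pos : ∀ x : V, x ≠ 0 → 0 < h0 x x)
    (hhG_symm : ∀ x y : Gg, hG x y = hG y x) (hhG_pos : ∀ x : Gg, x ≠ 0 → 0 < hG x x)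
    -- the inverse `h₀⁻¹` used in the block `D`:
    (h0inv : Module.Dual ℝ V →ₗ[ℝ] V)
    (hh0inv_left : ∀ x, h0inv (h0 x) = x) (hh0inv_right : ∀ φ, h0 (h0inv φ) = φ)
    -- the endomorphism τ determined by `𝐆'(ψ,ψ') = ⟨τ(ψ), ψ'⟩`:
    (τ : (V × Gg × Module.Dual ℝ V) →ₗ[ℝ] (V × Gg × Module.Dual ℝ V))
    (hτ : ∀ w w', gaussG V Gg A' B' Cm g0 hG h0inv w w' = pairHet V Gg c (τ w) w') :
    (∀ w, τ (τ w) = w) ↔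
      (h0 = g0 ∧
       (∀ (Φ : Gg) (X : V), B' Φ X = - c Φ (A' X)) ∧
       (∃ B0 : V →ₗ[ℝ] Module.Dual ℝ V, (∀ X Y : V, B0 X Y = - B0 Y X) ∧
          ∀ X Y : V, Cm X Y = - B0 X Y - (1/2 : ℝ) * c (A' X) (A' Y)) ∧
       (∀ Φ Φ' : Gg, hG (cinv (hG Φ)) Φ' = c Φ Φ')) := by
  rw [one_div, ← invOf_eq_inv]
  exact heterotic_generalized_metric_classification_general
    (c := { c with invFun := cinv, left_inv := hcinv_left, right_inv := hcinv_right })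
    (h := { h0 with invFun := h0inv, left_inv := hh0inv_left, right_inv := hh0inv_right })
    hc_symm hh0_symm hτ
end
end

section
/- Let V be a finite-dimensional real vector space, g a positive definite symmetric bilinear form on V, and B an invertible antisymmetric bilinear form on V, both viewed as linear maps V → V*. Set θ = B^{−1} : V* → V, G = −B g^{−1} B and Φ = −B. Then g+B and G+Φ are invertible, G is symmetric positive definite, Φ is antisymmetric, and the open-closed relation (g+B)^{−1} = (G+Φ)^{−1} + θ holds; moreover (G, Φ) is the unique pair of a symmetric invertible form and an antisymmetric form satisfying this relation. -/
/-!
STATEMENT 15: The background-independent gauge solution of the Seiberg–Witten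
open-closed relations.  All bilinear forms are identified with the induced linear
maps `V → V*`.
-/

noncomputable section

/-!
Since `B x x = 0`, the form `E = g + B` satisfies `E x x = g x x`, so it is injective, hence
invertible. Then `G + Φ = -B g⁻¹ B - B = -B g⁻¹ E` is a composite of invertible maps, while the
resolvent identity gives `E⁻¹ - B⁻¹ = E⁻¹ (B - E) B⁻¹ = -E⁻¹ g B⁻¹`; the two right-hand sides are
inverse to each other, which is the open-closed relation. The relation in turn determines `G + Φ`
as the inverse of `E⁻¹ - θ`, and the symmetric and antisymmetric parts of a form are unique.
Since `B` is antisymmetric, `G` is the pullback of `g` along `g⁻¹ B`, hence positive definite.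
-/

section LinearMaps

variable {R V W : Type*} [Semiring R] [AddCommGroup V] [Module R V] [AddCommGroup W] [Module R W]

/-- The metric `G = -B g⁻¹ B` of the background-independent gauge, with `gi` in the role of `g⁻¹`.
It makes sense for linear maps between any two modules; the case of bilinear forms is `W = V*`. -/
def gaugeMetric (B : V →ₗ[R] W) (gi : W →ₗ[R] V) : V →ₗ[R] W :=
  -(B ∘ₗ gi ∘ₗ B)

theorem leftInverse_sub_rightInverse_eq_comp {E B : V →ₗ[R] W} {P θ : W →ₗ[R] V}
    (hP : P ∘ₗ E = LinearMap.id) (hθ : B ∘ₗ θ = LinearMap.id) :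
    P - θ = P ∘ₗ (B - E) ∘ₗ θ := by
  rw [LinearMap.sub_comp, LinearMap.comp_sub, hθ, ← LinearMap.comp_assoc, hP,
    LinearMap.comp_id, LinearMap.id_comp]

variable {g B : V →ₗ[R] W} {gi θ P : W →ₗ[R] V}

theorem gaugeMetric_add_neg (hgi : gi ∘ₗ g = LinearMap.id) :
    gaugeMetric B gi + -B = -(B ∘ₗ gi ∘ₗ (g + B)) := by
  rw [gaugeMetric, LinearMap.comp_add, LinearMap.comp_add, hgi, LinearMap.comp_id, neg_add_rev]

theorem leftInverse_sub_eq_neg_comp_comp (hP : P ∘ₗ (g + B) = LinearMap.id)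
    (hθ : B ∘ₗ θ = LinearMap.id) : P - θ = -(P ∘ₗ g ∘ₗ θ) := by
  rw [leftInverse_sub_rightInverse_eq_comp hP hθ, sub_add_cancel_right, LinearMap.neg_comp,
    LinearMap.comp_neg]

theorem sub_comp_gaugeMetric_add_neg (hgi_left : gi ∘ₗ g = LinearMap.id)
    (hgi_right : g ∘ₗ gi = LinearMap.id) (hθ_left : θ ∘ₗ B = LinearMap.id)
    (hθ_right : B ∘ₗ θ = LinearMap.id) (hP : P ∘ₗ (g + B) = LinearMap.id) :
    (P - θ) ∘ₗ (gaugeMetric B gi + -B) = LinearMap.id := by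
  calc (P - θ) ∘ₗ (gaugeMetric B gi + -B)
      = P ∘ₗ g ∘ₗ (θ ∘ₗ B) ∘ₗ gi ∘ₗ (g + B) := by
        rw [leftInverse_sub_eq_neg_comp_comp hP hθ_right, gaugeMetric_add_neg hgi_left,
          LinearMap.neg_comp, LinearMap.comp_neg, neg_neg]
        rfl
    _ = P ∘ₗ (g ∘ₗ gi) ∘ₗ (g + B) := by rw [hθ_left]; rfl
    _ = LinearMap.id := by rw [hgi_right, LinearMap.id_comp, hP]

theorem gaugeMetric_add_neg_comp_sub (hgi : gi ∘ₗ g = LinearMap.id)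
    (hθ : B ∘ₗ θ = LinearMap.id) (hP_left : P ∘ₗ (g + B) = LinearMap.id)
    (hP_right : (g + B) ∘ₗ P = LinearMap.id) :
    (gaugeMetric B gi + -B) ∘ₗ (P - θ) = LinearMap.id := by
  calc (gaugeMetric B gi + -B) ∘ₗ (P - θ)
      = B ∘ₗ gi ∘ₗ ((g + B) ∘ₗ P) ∘ₗ g ∘ₗ θ := by
        rw [leftInverse_sub_eq_neg_comp_comp hP_left hθ, gaugeMetric_add_neg hgi,
          LinearMap.neg_comp, LinearMap.comp_neg, neg_neg]
        rfl
    _ = B ∘ₗ (gi ∘ₗ g) ∘ₗ θ := by rw [hP_right]; rfl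
    _ = LinearMap.id := by rw [hgi, LinearMap.id_comp, hθ]

theorem eq_gaugeMetric_add_neg_of_comp_sub_eq_id {M : V →ₗ[R] W}
    (hgi_left : gi ∘ₗ g = LinearMap.id) (hgi_right : g ∘ₗ gi = LinearMap.id)
    (hθ_left : θ ∘ₗ B = LinearMap.id) (hθ_right : B ∘ₗ θ = LinearMap.id)
    (hP : P ∘ₗ (g + B) = LinearMap.id) (hM : M ∘ₗ (P - θ) = LinearMap.id) :
    M = gaugeMetric B gi + -B := by
  calc M = M ∘ₗ (P - θ) ∘ₗ (gaugeMetric B gi + -B) := by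
        rw [sub_comp_gaugeMetric_add_neg hgi_left hgi_right hθ_left hθ_right hP, LinearMap.comp_id]
    _ = gaugeMetric B gi + -B := by rw [← LinearMap.comp_assoc, hM, LinearMap.id_comp]

end LinearMaps

section BilinearForms

open Module (Dual)

theorem eq_and_eq_of_symm_add_skew_eq {R V N : Type*} [CommSemiring R] [AddCommGroup V] [Module R V]
    [AddCommGroup N] [Module R N] [IsAddTorsionFree N] {G G' Φ Φ' : V →ₗ[R] V →ₗ[R] N}
    (hG : ∀ x y, G x y = G y x) (hG' : ∀ x y, G' x y = G' y x)
    (hΦ : ∀ x y, Φ x y = -Φ y x) (hΦ' : ∀ x y, Φ' x y = -Φ' y x)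
    (h : G + Φ = G' + Φ') : G = G' ∧ Φ = Φ' := by
  have h_apply (x y : V) : G x y + Φ x y = G' x y + Φ' x y := LinearMap.congr_fun₂ h x y
  have hGG' : G = G' := by
    ext x y
    refine nsmul_right_injective two_ne_zero ?_
    linear_combination (norm := module)
      h_apply x y + h_apply y x + hG x y - hΦ x y - hG' x y + hΦ' x y
  exact ⟨hGG', add_left_cancel (hGG' ▸ h)⟩

section CommRing

variable {R V : Type*} [CommRing R] [AddCommGroup V] [Module R V]
  {g B : V →ₗ[R] Dual R V} {gi : Dual R V →ₗ[R] V}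

theorem gaugeMetric_apply_apply (hg : ∀ x y, g x y = g y x) (hB : ∀ x y, B x y = -B y x)
    (hgi : g ∘ₗ gi = LinearMap.id) (x y : V) :
    gaugeMetric B gi x y = g (gi (B x)) (gi (B y)) := by
  calc gaugeMetric B gi x y = -B (gi (B x)) y := rfl
    _ = B y (gi (B x)) := (hB _ _).symm
    _ = g (gi (B y)) (gi (B x)) := by rw [← LinearMap.comp_apply g, hgi, LinearMap.id_apply]
    _ = g (gi (B x)) (gi (B y)) := hg _ _

theorem gaugeMetric_symm (hg : ∀ x y, g x y = g y x) (hB : ∀ x y, B x y = -B y x)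
    (hgi : g ∘ₗ gi = LinearMap.id) (x y : V) :
    gaugeMetric B gi x y = gaugeMetric B gi y x := by
  rw [gaugeMetric_apply_apply hg hB hgi, gaugeMetric_apply_apply hg hB hgi, hg]

theorem gaugeMetric_self_pos [Preorder R] (hg : ∀ x y, g x y = g y x)
    (hg_pos : ∀ x, x ≠ 0 → 0 < g x x) (hB : ∀ x y, B x y = -B y x)
    (hB_inj : Function.Injective B) (hgi : g ∘ₗ gi = LinearMap.id) {x : V} (hx : x ≠ 0) :
    0 < gaugeMetric B gi x x := by
  have hgi_inj : Function.Injective gi := LinearMap.injective_of_comp_eq_id gi g hgi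
  rw [gaugeMetric_apply_apply hg hB hgi]
  exact hg_pos _ (((hgi_inj.comp hB_inj).ne_iff' (by simp)).mpr hx)

theorem injective_add_of_anisotropic_of_isAlt (hg : ∀ x, x ≠ 0 → g x x ≠ 0) (hB : B.IsAlt) :
    Function.Injective (g + B) := by
  refine (injective_iff_map_eq_zero _).mpr fun x hx ↦ by_contra fun hx₀ ↦ hg x hx₀ ?_
  calc g x x = (g + B) x x := by rw [LinearMap.add_apply, LinearMap.add_apply, hB x, add_zero]
    _ = 0 := by rw [hx, LinearMap.zero_apply]

end CommRing

section Field

variable {K V : Type*} [Field K] [AddCommGroup V] [Module K V]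

theorem exists_inverse_add_of_anisotropic_of_isAlt [FiniteDimensional K V]
    {g B : V →ₗ[K] Dual K V} (hg : ∀ x, x ≠ 0 → g x x ≠ 0) (hB : B.IsAlt) :
    ∃ P : Dual K V →ₗ[K] V, P ∘ₗ (g + B) = LinearMap.id ∧ (g + B) ∘ₗ P = LinearMap.id :=
  let e := (g + B).linearEquivOfInjective (injective_add_of_anisotropic_of_isAlt hg hB)
    Subspace.dual_finrank_eq.symm
  ⟨e.symm, e.symm_comp, e.comp_symm⟩

theorem background_independent_gauge_general [LinearOrder K] [IsStrictOrderedRing K]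
    (g B : V →ₗ[K] Dual K V) (hg_symm : ∀ x y, g x y = g y x)
    (hg_pos : ∀ x, x ≠ 0 → 0 < g x x) (hB_skew : ∀ x y, B x y = -B y x)
    (gi : Dual K V →ₗ[K] V)
    (hgi_left : gi ∘ₗ g = LinearMap.id) (hgi_right : g ∘ₗ gi = LinearMap.id)
    (θ : Dual K V →ₗ[K] V)
    (hθ_left : θ ∘ₗ B = LinearMap.id) (hθ_right : B ∘ₗ θ = LinearMap.id) :
    (∀ x y, gaugeMetric B gi x y = gaugeMetric B gi y x) ∧
    (∀ x, x ≠ 0 → 0 < gaugeMetric B gi x x) ∧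
    (∀ x y, (-B) x y = -(-B) y x) ∧
    (∃ P Q : Dual K V →ₗ[K] V,
      P ∘ₗ (g + B) = LinearMap.id ∧ (g + B) ∘ₗ P = LinearMap.id ∧
      Q ∘ₗ (gaugeMetric B gi + -B) = LinearMap.id ∧
      (gaugeMetric B gi + -B) ∘ₗ Q = LinearMap.id ∧ P = Q + θ) ∧
    (∀ (G' Φ' : V →ₗ[K] Dual K V) (P Q' : Dual K V →ₗ[K] V),
      (∀ x y, G' x y = G' y x) → (∀ x y, Φ' x y = -Φ' y x) →
      (G' + Φ') ∘ₗ Q' = LinearMap.id → P ∘ₗ (g + B) = LinearMap.id → P = Q' + θ →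
      G' = gaugeMetric B gi ∧ Φ' = -B) := by
  have hG_symm := gaugeMetric_symm hg_symm hB_skew hgi_right
  have hΦ_skew (x y : V) : (-B) x y = -(-B) y x := congrArg Neg.neg (hB_skew x y)
  refine ⟨hG_symm, fun x ↦ gaugeMetric_self_pos hg_symm hg_pos hB_skew
    (LinearMap.injective_of_comp_eq_id B θ hθ_left) hgi_right, hΦ_skew, ?_, ?_⟩
  · -- By Erdős–Kaplansky, a space isomorphic to its dual is finite-dimensional.
    have : FiniteDimensional K V :=
      Basis.linearEquiv_dual_iff_finiteDimensional.mp ⟨.ofLinearMap g gi hgi_right hgi_left⟩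
    obtain ⟨P, hP_left, hP_right⟩ := exists_inverse_add_of_anisotropic_of_isAlt
      (fun x hx ↦ (hg_pos x hx).ne') (fun x ↦ self_eq_neg.mp (hB_skew x x))
    exact ⟨P, P - θ, hP_left, hP_right,
      sub_comp_gaugeMetric_add_neg hgi_left hgi_right hθ_left hθ_right hP_left,
      gaugeMetric_add_neg_comp_sub hgi_left hθ_right hP_left hP_right, (sub_add_cancel P θ).symm⟩
  · intro G' Φ' P Q' hG'_symm hΦ'_skew hQ' hP h_rel
    refine eq_and_eq_of_symm_add_skew_eq hG'_symm hG_symm hΦ'_skew hΦ_skew ?_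
    refine eq_gaugeMetric_add_neg_of_comp_sub_eq_id hgi_left hgi_right hθ_left hθ_right hP ?_
    rwa [h_rel, add_sub_cancel_right]

end Field

end BilinearForms

/-- **STATEMENT 15.** For `g` positive definite symmetric and `B` invertible
antisymmetric (as maps `V → V*`), put `θ = B⁻¹`, `G = −B g⁻¹ B`, `Φ = −B`.  Then
`g+B` and `G+Φ` are invertible, `G` is symmetric positive definite, `Φ` is
antisymmetric, the open-closed relation `(g+B)⁻¹ = (G+Φ)⁻¹ + θ` holds, and `(G,Φ)`
is the unique such pair. -/
theorem background_independent_gauge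
    (V : Type) [AddCommGroup V] [Module ℝ V] [FiniteDimensional ℝ V]
    (g B : V →ₗ[ℝ] Module.Dual ℝ V)
    (hg_symm : ∀ x y : V, g x y = g y x)
    (hg_pos : ∀ x : V, x ≠ 0 → 0 < g x x)
    (hB_skew : ∀ x y : V, B x y = - B y x)
    -- `g⁻¹`:
    (gi : Module.Dual ℝ V →ₗ[ℝ] V)
    (hgi_left : ∀ x, gi (g x) = x) (hgi_right : ∀ φ, g (gi φ) = φ)
    -- `θ = B⁻¹`:
    (θ : Module.Dual ℝ V →ₗ[ℝ] V)
    (hθ_left : ∀ x, θ (B x) = x) (hθ_right : ∀ φ, B (θ φ) = φ) :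
    -- `G = −B g⁻¹ B` is symmetric positive definite:
    (∀ x y : V, (-(B ∘ₗ gi ∘ₗ B)) x y = (-(B ∘ₗ gi ∘ₗ B)) y x) ∧
    (∀ x : V, x ≠ 0 → 0 < (-(B ∘ₗ gi ∘ₗ B)) x x) ∧
    -- `Φ = −B` is antisymmetric:
    (∀ x y : V, (-B) x y = - (-B) y x) ∧
    -- `g+B` and `G+Φ` are invertible and the open-closed relation
    -- `(g+B)⁻¹ = (G+Φ)⁻¹ + θ` holds:
    (∃ P Q : Module.Dual ℝ V →ₗ[ℝ] V,
      P ∘ₗ (g + B) = LinearMap.id ∧ (g + B) ∘ₗ P = LinearMap.id ∧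
      Q ∘ₗ ((-(B ∘ₗ gi ∘ₗ B)) + (-B)) = LinearMap.id ∧
      ((-(B ∘ₗ gi ∘ₗ B)) + (-B)) ∘ₗ Q = LinearMap.id ∧
      P = Q + θ) ∧
    -- uniqueness of `(G, Φ)`:
    (∀ (G' Φ' : V →ₗ[ℝ] Module.Dual ℝ V)
        (P Q' : Module.Dual ℝ V →ₗ[ℝ] V),
      (∀ x y : V, G' x y = G' y x) → Function.Bijective G' →
      (∀ x y : V, Φ' x y = - Φ' y x) →
      Q' ∘ₗ (G' + Φ') = LinearMap.id → (G' + Φ') ∘ₗ Q' = LinearMap.id →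
      P ∘ₗ (g + B) = LinearMap.id → (g + B) ∘ₗ P = LinearMap.id →
      P = Q' + θ →
      G' = -(B ∘ₗ gi ∘ₗ B) ∧ Φ' = -B) := by
  obtain ⟨hG_symm, hG_pos, hΦ_skew, h_inv, h_unique⟩ := background_independent_gauge_general
    g B hg_symm hg_pos hB_skew gi (LinearMap.ext hgi_left) (LinearMap.ext hgi_right)
    θ (LinearMap.ext hθ_left) (LinearMap.ext hθ_right)
  exact ⟨hG_symm, hG_pos, hΦ_skew, h_inv, fun G' Φ' P Q' hG' _ hΦ' _ hQ' hP _ h_rel ↦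
    h_unique G' Φ' P Q' hG' hΦ' hQ' hP h_rel⟩
end
end
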